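/- arXiv:1509.08263 — 3 statements merged into one kernel-verified Lean document; each statement's English description precedes it below -/
import Mathlib

section
/- Let x be an n×n complex hermitian positive semidefinite matrix of rank 1 and let π be an n×n complex hermitian matrix lying in the image of L_x, i.e. π = x∘w for some hermitian matrix w. Then tr((π∘x)·(π∘x)) = ((tr x)²/4)·(tr(π·π) + 3·(tr π)²). -/
open Matrix
open scoped ComplexOrder

/-- The Jordan product of two matrices. -/
noncomputable def jordanProd {n : ℕ} (a b : Matrix (Fin n) (Fin n) ℂ) :
    Matrix (Fin n) (Fin n) ℂ :=
  (1 / 2 : ℂ) • (a * b + b * a)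

theorem exists_vecMulVec_of_rank_one {n : ℕ} (x : Matrix (Fin n) (Fin n) ℂ) (h : x.rank = 1) :
    ∃ u v : Fin n → ℂ, x = vecMulVec u v := by
  unfold Matrix.rank at h
  obtain ⟨u, -, hu⟩ := finrank_eq_one_iff'.mp h
  choose c hc using fun j : Fin n =>
    hu ⟨x.mulVecLin (Pi.single j 1), LinearMap.mem_range_self _ _⟩
  refine ⟨u.1, c, ?_⟩
  ext i j
  have := congrFun (congrArg Subtype.val (hc j)) i
  simp at this
  rw [vecMulVec_apply, mul_comm, this]

theorem rank_one_sandwich {n : ℕ} (x a : Matrix (Fin n) (Fin n) ℂ) (h : x.rank = 1) :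
    x * a * x = (x * a).trace • x := by
  obtain ⟨u, v, rfl⟩ := exists_vecMulVec_of_rank_one x h
  rw [vecMulVec_mul, vecMulVec_mul_vecMulVec, trace_vecMulVec, dotProduct_comm u]
  ext i j
  simp [vecMulVec_apply]
  try ring

theorem rank_one_psd_trace_sq_jordan
    (n : ℕ) (hn : 2 ≤ n) (x p : Matrix (Fin n) (Fin n) ℂ)
    (hherm : x.IsHermitian) (hpsd : x.PosSemidef) (hrank : x.rank = 1)
    (hp : ∃ w : Matrix (Fin n) (Fin n) ℂ, w.IsHermitian ∧ p = jordanProd x w) :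
    (jordanProd p x * jordanProd p x).trace
      = (x.trace ^ 2 / 4) * ((p * p).trace + 3 * p.trace ^ 2) := by
  obtain ⟨w, -, rfl⟩ := hp
  have h1 := rank_one_sandwich x w hrank
  have h2 : x * x = x.trace • x := by simpa using rank_one_sandwich x 1 hrank
  have ht : (jordanProd x w).trace = (x * w).trace := by
    simp only [jordanProd, trace_smul, trace_add, trace_mul_comm w x, smul_eq_mul]
    ring
  have hxp : (x * jordanProd x w).trace = x.trace * (x * w).trace := by
    have e : (x * (w * x)).trace = (x * x * w).trace := by
      rw [trace_mul_comm, mul_assoc, trace_mul_comm]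
    simp only [jordanProd, mul_smul_comm, mul_add, trace_smul, trace_add, smul_eq_mul, e]
    rw [← mul_assoc, h2, smul_mul_assoc, trace_smul, smul_eq_mul]
    ring
  have hj : jordanProd (jordanProd x w) x
      = (1 / 2 : ℂ) • ((x * w).trace • x + x.trace • jordanProd x w) := by
    have e1 : x * (w * x) = (x * w).trace • x := by rw [← mul_assoc, h1]
    have e2 : w * x * x = x.trace • (w * x) := by rw [mul_assoc, h2, mul_smul_comm]
    have e3 : x * (x * w) = x.trace • (x * w) := by rw [← mul_assoc, h2, smul_mul_assoc]
    simp only [jordanProd, smul_mul_assoc, mul_smul_comm, add_mul, mul_add, h1, e1, e2, e3]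
    module
  rw [hj, ht]
  generalize jordanProd x w = p at *
  have hpx : (p * x).trace = x.trace * (x * w).trace := by rw [trace_mul_comm, hxp]
  simp only [smul_mul_assoc, mul_smul_comm, add_mul, mul_add, trace_smul, trace_add, h2, hxp, hpx,
    smul_eq_mul]
  ring
end

section
/- Theorem 6.1(ii): with the notation of the context, Σ_α 𝒳_{e_α}·𝓛_{e_α} = n·𝒳_e·𝓛_e and Σ_α 𝒴_{e_α}·𝓛_{e_α} = n·𝒴_e·𝓛_e. -/
open Matrix
open scoped ComplexOrder

/-- The Jordan triple product `{uvw} = u∘(v∘w) − v∘(u∘w) + (u∘v)∘w`. -/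
noncomputable def jTriple {n : ℕ} (u v w : Matrix (Fin n) (Fin n) ℂ) :
    Matrix (Fin n) (Fin n) ℂ :=
  jordanProd u (jordanProd v w) - jordanProd v (jordanProd u w)
    + jordanProd (jordanProd u v) w

/-- The real inner product `⟨u|v⟩ = (1/n)·Re(tr(u·v))`. -/
noncomputable def jInner {n : ℕ} (u v : Matrix (Fin n) (Fin n) ℂ) : ℝ :=
  (1 / n : ℝ) * ((u * v).trace).re

/-- `𝒴_u = ⟨u|x⟩`. -/
noncomputable def Yfun {n : ℕ} (x u : Matrix (Fin n) (Fin n) ℂ) : ℝ :=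
  jInner u x

/-- `𝓛_u = ⟨u∘x|π⟩`. -/
noncomputable def Lfun {n : ℕ} (x p u : Matrix (Fin n) (Fin n) ℂ) : ℝ :=
  jInner (jordanProd u x) p

/-- `𝓛_{u,v} = ⟨u∘(v∘x) − v∘(u∘x)|π⟩ − μ·i·tr(x·[u,v])/(2·tr x)`. -/
noncomputable def LLfun {n : ℕ} (μ : ℝ) (x p u v : Matrix (Fin n) (Fin n) ℂ) : ℝ :=
  jInner (jordanProd u (jordanProd v x) - jordanProd v (jordanProd u x)) p
    - μ * (Complex.I * (x * (u * v - v * u)).trace).re / (2 * (x.trace).re)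

/-- `𝒳_u = ⟨x|{πuπ}⟩ + n·μ²·Re(tr(x·u))/(tr x)² − μ·i·tr(x·[u,π])/(tr x)`. -/
noncomputable def Xfun {n : ℕ} (μ : ℝ) (x p u : Matrix (Fin n) (Fin n) ℂ) : ℝ :=
  jInner x (jTriple p u p) + (n : ℝ) * μ ^ 2 * ((x * u).trace).re / ((x.trace).re) ^ 2
    - μ * (Complex.I * (x * (u * p - p * u)).trace).re / (x.trace).re

theorem qr_rank_one {n : ℕ} (x : Matrix (Fin n) (Fin n) ℂ) (h : x.rank = 1)
    (a : Matrix (Fin n) (Fin n) ℂ) : x * a * x = (x * a).trace • x := by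
  obtain ⟨v, w, rfl⟩ : ∃ v w : Fin n → ℂ, x = vecMulVec v w := by
    rw [Matrix.rank] at h
    obtain ⟨⟨v, hv⟩, hv0, hv1⟩ := finrank_eq_one_iff'.mp h
    have : ∀ j, ∃ c : ℂ, c • v = x.col j := by
      intro j
      obtain ⟨c, hc⟩ := hv1 ⟨x.mulVecLin (Pi.single j 1), ⟨_, rfl⟩⟩
      refine ⟨c, ?_⟩
      have := congrArg Subtype.val hc
      simpa using this
    choose c hc using this
    refine ⟨v, c, ?_⟩
    ext i j
    have := congrFun (hc j) i
    simp [vecMulVec_apply] at this ⊢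
    rw [← this, mul_comm]
  rw [vecMulVec_mul, vecMulVec_mul_vecMulVec, trace_vecMulVec, dotProduct_comm]
  ext i j
  simp [vecMulVec_apply]
  try ring

theorem qr_herm_im {n : ℕ} {a b : Matrix (Fin n) (Fin n) ℂ} (ha : a.IsHermitian)
    (hb : b.IsHermitian) : ((a * b).trace).im = 0 := by
  have h : star ((a * b).trace) = (a * b).trace := by
    rw [← trace_conjTranspose, conjTranspose_mul, ha.eq, hb.eq, trace_mul_comm]
  exact Complex.conj_eq_iff_im.mp h

theorem qr_jp_herm {n : ℕ} {a b : Matrix (Fin n) (Fin n) ℂ} (ha : a.IsHermitian)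
    (hb : b.IsHermitian) : (jordanProd a b).IsHermitian := by
  unfold jordanProd Matrix.IsHermitian
  rw [conjTranspose_smul, conjTranspose_add, conjTranspose_mul, conjTranspose_mul, ha.eq, hb.eq,
    add_comm]
  simp

theorem qr_triple {n : ℕ} (p u : Matrix (Fin n) (Fin n) ℂ) : jTriple p u p = p * u * p := by
  unfold jTriple jordanProd
  simp only [smul_add, mul_add, add_mul, Matrix.mul_smul, Matrix.smul_mul, mul_assoc]
  module

theorem qr_L {n : ℕ} (x p u : Matrix (Fin n) (Fin n) ℂ) :
    Lfun x p u = jInner u (jordanProd x p) := by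
  unfold Lfun jInner jordanProd
  simp only [Matrix.mul_smul, Matrix.smul_mul, mul_add, add_mul, trace_smul, trace_add, mul_assoc]
  rw [trace_mul_comm x (u * p), mul_assoc]

theorem qr_X {n : ℕ} (μ : ℝ) (x p u : Matrix (Fin n) (Fin n) ℂ) :
    Xfun μ x p u = ((((1 / n : ℝ) : ℂ) • (p * x * p) +
      (((n : ℝ) * μ ^ 2 / ((x.trace).re) ^ 2 : ℝ) : ℂ) • x
      - ((μ / (x.trace).re : ℝ) : ℂ) • (Complex.I • (p * x - x * p))) * u).trace.re := by
  unfold Xfun jInner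
  rw [qr_triple]
  have h1 : (x * (p * u * p)).trace = (p * x * p * u).trace := by
    rw [← mul_assoc, trace_mul_comm]; simp only [mul_assoc]
  have h2 : (x * (u * p - p * u)).trace = ((p * x - x * p) * u).trace := by
    rw [mul_sub, sub_mul, trace_sub, trace_sub, ← mul_assoc, trace_mul_comm (x * u) p]
    simp only [mul_assoc]
  rw [h1, h2]
  simp only [add_mul _ _ u, sub_mul _ _ u, Matrix.smul_mul, trace_add, trace_sub, trace_smul,
    smul_eq_mul, Complex.add_re, Complex.sub_re, Complex.re_ofReal_mul]
  ring

theorem qr_sum {n m : ℕ} (E : Fin m → Matrix (Fin n) (Fin n) ℂ) (M u : Matrix (Fin n) (Fin n) ℂ)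
    (h : u = ∑ α, (jInner (E α) u : ℂ) • E α) :
    ∑ α, (M * E α).trace.re * jInner (E α) u = (M * u).trace.re := by
  conv_rhs => rw [h]
  rw [Finset.mul_sum, trace_sum, Complex.re_sum]
  refine Finset.sum_congr rfl fun α _ => ?_
  rw [Matrix.mul_smul, trace_smul, smul_eq_mul, Complex.re_ofReal_mul, mul_comm]

theorem quadratic_relation_ii
    (n : ℕ) (hn : 2 ≤ n) (μ : ℝ)
    (x : Matrix (Fin n) (Fin n) ℂ)
    (hherm : x.IsHermitian) (hpsd : x.PosSemidef) (hrank : x.rank = 1)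
    (p w : Matrix (Fin n) (Fin n) ℂ) (hw : w.IsHermitian) (hp : p = jordanProd x w)
    (E : Fin (n ^ 2) → Matrix (Fin n) (Fin n) ℂ)
    (hEherm : ∀ α, (E α).IsHermitian)
    (hEorth : ∀ α β, jInner (E α) (E β) = if α = β then 1 else 0)
    (hEspan : ∀ u : Matrix (Fin n) (Fin n) ℂ, u.IsHermitian →
      u = ∑ α, (jInner (E α) u : ℂ) • E α)
    :
    (∑ α, Xfun μ x p (E α) * Lfun x p (E α)) = (n : ℝ) * Xfun μ x p 1 * Lfun x p 1 ∧
    (∑ α, Yfun x (E α) * Lfun x p (E α)) = (n : ℝ) * Yfun x 1 * Lfun x p 1 := by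
  have hn0 : (n : ℝ) ≠ 0 := by positivity
  have hph : p.IsHermitian := hp ▸ qr_jp_herm hherm hw
  have hexp := hEspan _ (qr_jp_herm hherm hph)
  have him := qr_herm_im hherm hph
  have hxim : (x.trace).im = 0 := by
    simpa using qr_herm_im hherm (isHermitian_one (n := Fin n) (α := ℂ))
  have r1 : x * p * x = (x * p).trace • x := qr_rank_one x hrank p
  have r2 : x * x = x.trace • x := by simpa using qr_rank_one x hrank 1
  have hxu : (x * jordanProd x p).trace = x.trace * (x * p).trace := by
    unfold jordanProd
    rw [Matrix.mul_smul, mul_add, ← mul_assoc, ← mul_assoc, r1, r2]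
    simp only [Matrix.smul_mul, trace_smul, trace_add, smul_eq_mul]
    ring
  have hxpu : (x * (p * jordanProd x p * p)).trace = (x * p).trace * (x * (p * p)).trace := by
    have e1 : x * (p * (x * p) * p) = (x * p * x) * (p * p) := by simp only [mul_assoc]
    have e2 : (x * (p * (p * x) * p)).trace = ((x * p * x) * (p * p)).trace := by
      rw [show x * (p * (p * x) * p) = (x * p * p) * (x * p) by simp only [mul_assoc],
        trace_mul_comm]
      simp only [mul_assoc]
    unfold jordanProd
    simp only [Matrix.mul_smul, Matrix.smul_mul, mul_add, add_mul, trace_smul, trace_add]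
    rw [e2, e1, r1]
    simp only [Matrix.smul_mul, trace_smul, smul_eq_mul]
    ring
  have hc : (x * (jordanProd x p * p - p * jordanProd x p)).trace = 0 := by
    have e : (x * (p * (p * x))).trace = (x * (x * (p * p))).trace := by
      rw [show x * (p * (p * x)) = (x * p * p) * x by simp only [mul_assoc], trace_mul_comm]
      simp only [mul_assoc]
    unfold jordanProd
    simp only [Matrix.mul_smul, Matrix.smul_mul, mul_add, add_mul, mul_sub, trace_smul, trace_add,
      trace_sub, mul_assoc]
    rw [e]
    simp only [smul_eq_mul]
    ring
  have hL1 : Lfun x p 1 = (1 / n : ℝ) * ((x * p).trace).re := by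
    rw [qr_L]
    unfold jInner jordanProd
    rw [one_mul, trace_smul, trace_add, trace_mul_comm p x, smul_eq_mul]
    congr 2
    ring
  constructor
  · have : ∑ α, Xfun μ x p (E α) * Lfun x p (E α) = Xfun μ x p (jordanProd x p) := by
      rw [qr_X μ x p (jordanProd x p), ← qr_sum E _ _ hexp]
      exact Finset.sum_congr rfl fun α _ => by rw [qr_X, qr_L]
    rw [this, hL1]
    unfold Xfun jInner
    rw [qr_triple, qr_triple, hxu, hxpu, hc]
    simp only [mul_one, one_mul, sub_self, mul_zero, trace_zero, Complex.zero_re, zero_div,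
      Complex.mul_re, him, hxim, zero_mul, sub_zero]
    field_simp
    try ring
  · have : ∑ α, Yfun x (E α) * Lfun x p (E α) = (1 / n : ℝ) * (x * jordanProd x p).trace.re := by
      rw [← qr_sum E _ _ hexp, Finset.mul_sum]
      refine Finset.sum_congr rfl fun α _ => ?_
      rw [qr_L, Yfun, jInner, trace_mul_comm, mul_assoc]
    rw [this, hL1, hxu]
    unfold Yfun jInner
    simp only [one_mul, Complex.mul_re, him, mul_zero, sub_zero]
    field_simp
end

section
/- Theorem 6.1(v): with the notation of the context, for every hermitian matrix u one has (2/n)·Σ_α 𝓛_{e_α,u}·𝒳_{e_α} = −𝒳_u·𝓛_e + 𝓛_u·𝒳_e and (2/n)·Σ_α 𝓛_{e_α,u}·𝒴_{e_α} = 𝒴_u·𝓛_e − 𝓛_u·𝒴_e. -/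
open Matrix
open scoped ComplexOrder

theorem aux_LL {n : ℕ} (hn : (n:ℝ) ≠ 0) (μ T : ℝ) (hT : T ≠ 0) (x p a u : Matrix (Fin n) (Fin n) ℂ)
    (hx : x.trace = (T:ℂ)) :
    LLfun μ x p a u = jInner a ((1/4:ℂ) • (u*(x*p-p*x) - (x*p-p*x)*u)
      - ((n*μ/T/2:ℝ) * Complex.I : ℂ) • (u*x-x*u)) := by
  have h1 : (u*(a*(x*p))).trace = (a*(x*(p*u))).trace := by
    rw [trace_mul_comm]; simp only [mul_assoc]
  have h2 : (x*(a*(u*p))).trace = (a*(u*(p*x))).trace := by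
    rw [trace_mul_comm]; simp only [mul_assoc]
  have h3 : (x*(u*(a*p))).trace = (a*(p*(x*u))).trace := by
    rw [← mul_assoc, trace_mul_comm]; simp only [mul_assoc]
  have h4 : (u*(x*(a*p))).trace = (a*(p*(u*x))).trace := by
    rw [← mul_assoc, trace_mul_comm]; simp only [mul_assoc]
  have h5 : (x*(a*u)).trace = (a*(u*x)).trace := by
    rw [trace_mul_comm]; simp only [mul_assoc]
  have h6 : (x*(u*a)).trace = (a*(x*u)).trace := by
    rw [← mul_assoc, trace_mul_comm]
  unfold LLfun jInner jordanProd
  simp only [mul_add, add_mul, mul_sub, sub_mul, smul_add, smul_sub, mul_smul_comm, smul_mul_assoc,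
    trace_add, trace_sub, trace_smul, mul_assoc, h1, h2, h3, h4, h5, h6, hx, smul_eq_mul]
  simp [Complex.mul_re, Complex.mul_im]
  field_simp
  ring

theorem aux_X {n : ℕ} (hn : (n:ℝ) ≠ 0) (μ T : ℝ) (hT : T ≠ 0) (x p a : Matrix (Fin n) (Fin n) ℂ)
    (hx : x.trace = (T:ℂ)) :
    Xfun μ x p a = jInner a (p*x*p + ((n*μ/T:ℝ)^2 : ℂ) • x
      + ((n*μ/T:ℝ) * Complex.I : ℂ) • (x*p-p*x)) := by
  have h0 : jTriple p a p = p*(a*p) := by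
    unfold jTriple jordanProd
    simp only [mul_add, add_mul, mul_sub, sub_mul, smul_add, smul_sub, mul_smul_comm,
      smul_mul_assoc, mul_assoc]
    module
  have h1 : (x*(p*(a*p))).trace = (a*(p*(x*p))).trace := by
    rw [← mul_assoc, trace_mul_comm]; simp only [mul_assoc]
  have h2 : (x*a).trace = (a*x).trace := trace_mul_comm _ _
  have h5 : (x*(a*p)).trace = (a*(p*x)).trace := by
    rw [trace_mul_comm]; simp only [mul_assoc]
  have h6 : (x*(p*a)).trace = (a*(x*p)).trace := by
    rw [← mul_assoc, trace_mul_comm]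
  unfold Xfun
  rw [h0]
  unfold jInner
  simp only [mul_add, add_mul, mul_sub, sub_mul, smul_add, smul_sub, mul_smul_comm, smul_mul_assoc,
    trace_add, trace_sub, trace_smul, mul_assoc, h1, h2, h5, h6, hx, smul_eq_mul, pow_two]
  simp [Complex.mul_re, Complex.mul_im]
  field_simp
  ring

theorem aux_real {n : ℕ} (a b : Matrix (Fin n) (Fin n) ℂ) (ha : a.IsHermitian)
    (hb : b.IsHermitian) : (a*b).trace = (((a*b).trace.re : ℝ) : ℂ) := by
  symm
  rw [← Complex.conj_eq_iff_re]
  have := trace_conjTranspose (a*b)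
  rw [conjTranspose_mul, ha.eq, hb.eq, trace_mul_comm] at this
  exact this.symm

theorem aux_rank {n : ℕ} (x : Matrix (Fin n) (Fin n) ℂ) (h : x.rank = 1)
    (a : Matrix (Fin n) (Fin n) ℂ) : x * (a * x) = (x*a).trace • x := by
  obtain ⟨v, w, rfl⟩ : ∃ v w : Fin n → ℂ, x = vecMulVec v w := by
    rw [Matrix.rank, finrank_eq_one_iff'] at h
    obtain ⟨⟨v, hv⟩, -, h⟩ := h
    choose c hc using fun j => h ⟨x.mulVecLin (Pi.single j 1), LinearMap.mem_range_self _ _⟩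
    refine ⟨v, c, ?_⟩
    ext i j
    have := congrFun (congrArg Subtype.val (hc j)) i
    simp at this
    rw [vecMulVec_apply, ← this, mul_comm]
  rw [← mul_assoc, vecMulVec_mul, vecMulVec_mul_vecMulVec, trace_vecMulVec, vecMulVec_smul, dotProduct_comm]

theorem aux_sum {n N : ℕ} (E : Fin N → Matrix (Fin n) (Fin n) ℂ)
    (hEspan : ∀ u : Matrix (Fin n) (Fin n) ℂ, u.IsHermitian →
      u = ∑ α, (jInner (E α) u : ℂ) • E α) (A B : Matrix (Fin n) (Fin n) ℂ) (hB : B.IsHermitian) :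
    ∑ α, jInner (E α) A * jInner (E α) B = jInner A B := by
  conv_rhs => rw [hEspan B hB]
  conv_rhs => unfold jInner
  simp only [Finset.mul_sum, trace_sum, mul_smul_comm, trace_smul, Complex.re_sum, smul_eq_mul,
    Complex.re_ofReal_mul]
  refine Finset.sum_congr rfl fun i _ => ?_
  rw [trace_mul_comm A]
  unfold jInner
  ring

theorem quadratic_relation_v
    (n : ℕ) (hn : 2 ≤ n) (μ : ℝ)
    (x : Matrix (Fin n) (Fin n) ℂ)
    (hherm : x.IsHermitian) (hpsd : x.PosSemidef) (hrank : x.rank = 1)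
    (p w : Matrix (Fin n) (Fin n) ℂ) (hw : w.IsHermitian) (hp : p = jordanProd x w)
    (E : Fin (n ^ 2) → Matrix (Fin n) (Fin n) ℂ)
    (hEherm : ∀ α, (E α).IsHermitian)
    (hEorth : ∀ α β, jInner (E α) (E β) = if α = β then 1 else 0)
    (hEspan : ∀ u : Matrix (Fin n) (Fin n) ℂ, u.IsHermitian →
      u = ∑ α, (jInner (E α) u : ℂ) • E α)
    (u : Matrix (Fin n) (Fin n) ℂ) (hu : u.IsHermitian)
    :
    (2 / (n : ℝ)) * (∑ α, LLfun μ x p (E α) u * Xfun μ x p (E α))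
      = -(Xfun μ x p u * Lfun x p 1) + Lfun x p u * Xfun μ x p 1 ∧
    (2 / (n : ℝ)) * (∑ α, LLfun μ x p (E α) u * Yfun x (E α))
      = Yfun x u * Lfun x p 1 - Lfun x p u * Yfun x 1 := by
  have hn0 : (n:ℝ) ≠ 0 := by positivity
  have hph : p.IsHermitian := by
    rw [hp]; unfold jordanProd
    rw [IsHermitian, conjTranspose_smul, conjTranspose_add, conjTranspose_mul, conjTranspose_mul,
      hw.eq, hherm.eq, add_comm]
    simp
  obtain ⟨T, hT⟩ : ∃ T : ℝ, x.trace = (T:ℂ) := by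
    have := aux_real x 1 hherm (by simp)
    rw [mul_one] at this
    exact ⟨_, this⟩
  obtain ⟨s, hs⟩ : ∃ s : ℝ, (x*p).trace = (s:ℂ) := ⟨_, aux_real x p hherm hph⟩
  obtain ⟨q, hq⟩ : ∃ q : ℝ, (x*(p*p)).trace = (q:ℂ) :=
    ⟨_, aux_real x (p*p) hherm (by rw [IsHermitian, conjTranspose_mul, hph.eq])⟩
  have hT0 : T ≠ 0 := by
    rintro rfl
    have : x = 0 := hpsd.trace_eq_zero_iff.1 (by simpa using hT)
    rw [this] at hrank
    simp at hrank
  have hxx : x * x = (T:ℂ) • x := by simpa [hT] using aux_rank x hrank 1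
  have hxpx : x * (p * x) = (s:ℂ) • x := by simpa [hs] using aux_rank x hrank p
  have hxppx : x * (p * (p * x)) = (q:ℂ) • x := by
    simpa [hq, mul_assoc] using aux_rank x hrank (p*p)
  have hxx' : ∀ a, x * (x * a) = (T:ℂ) • (x * a) := fun a => by
    rw [← mul_assoc, hxx, smul_mul_assoc]
  have hxpx' : ∀ a, x * (p * (x * a)) = (s:ℂ) • (x * a) := fun a => by
    rw [← smul_mul_assoc, ← hxpx]; simp only [mul_assoc]
  have hxppx' : ∀ a, x * (p * (p * (x * a))) = (q:ℂ) • (x * a) := fun a => by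
    rw [← smul_mul_assoc, ← hxppx]; simp only [mul_assoc]
  have hL : ∀ v, Lfun x p v = jInner v ((1/2:ℂ) • (x*p+p*x)) := by
    intro v
    have h1 : (x*(v*p)).trace = (v*(p*x)).trace := by
      rw [trace_mul_comm]; simp only [mul_assoc]
    unfold Lfun jInner jordanProd
    simp only [mul_add, add_mul, smul_add, mul_smul_comm, smul_mul_assoc,
      trace_add, trace_smul, mul_assoc, h1]
  have hL1 : Lfun x p 1 = s / n := by
    rw [hL]; unfold jInner
    rw [one_mul, trace_smul, trace_add, trace_mul_comm p x, hs]
    simp; ring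
  -- general adjunction
  have hadj : ∀ B, jInner ((1/4:ℂ) • (u*(x*p-p*x) - (x*p-p*x)*u)
      - ((n*μ/T/2:ℝ) * Complex.I : ℂ) • (u*x-x*u)) B =
      jInner u ((1/4:ℂ) • ((x*p-p*x)*B - B*(x*p-p*x))
        - ((n*μ/T/2:ℝ) * Complex.I : ℂ) • (x*B-B*x)) := by
    intro B
    have h1 : (x*(p*(u*B))).trace = (u*(B*(x*p))).trace := by
      rw [← mul_assoc, trace_mul_comm]; simp only [mul_assoc]
    have h2 : (p*(x*(u*B))).trace = (u*(B*(p*x))).trace := by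
      rw [← mul_assoc, trace_mul_comm]; simp only [mul_assoc]
    have h3 : (x*(u*B)).trace = (u*(B*x)).trace := by
      rw [trace_mul_comm]; simp only [mul_assoc]
    unfold jInner
    simp only [mul_add, add_mul, mul_sub, sub_mul, smul_add, smul_sub, mul_smul_comm,
      smul_mul_assoc, trace_add, trace_sub, trace_smul, mul_assoc, h1, h2, h3]
  have hlin : ∀ (a b : ℝ) (v A B : Matrix (Fin n) (Fin n) ℂ),
      jInner v ((a:ℂ) • A + (b:ℂ) • B) = a * jInner v A + b * jInner v B := by
    intro a b v A B
    unfold jInner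
    simp only [mul_add, mul_smul_comm, trace_add, trace_smul, smul_eq_mul, Complex.add_re,
      Complex.re_ofReal_mul]
    ring
  constructor
  · simp only [aux_LL hn0 μ T hT0 x p _ _ hT, aux_X hn0 μ T hT0 x p _ hT]
    rw [aux_sum E hEspan, hadj, hL1, hL]
    · generalize n*μ/T = m
      have h1 : jInner 1 (p*x*p + ((m:ℝ)^2 : ℂ) • x + ((m:ℝ) * Complex.I : ℂ) • (x*p-p*x))
          = (q + m^2*T)/n := by
        unfold jInner
        have : (p*x*p).trace = (q:ℂ) := by rw [mul_assoc, trace_mul_comm, mul_assoc, hq]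
        rw [one_mul, trace_add, trace_add, trace_smul, trace_smul, trace_sub, trace_mul_comm p x,
          this, hT]
        simp [← Complex.ofReal_pow]; ring
      rw [h1]
      have h2 : (1/4:ℂ) • ((x*p-p*x)*(p*x*p + ((m:ℝ)^2 : ℂ) • x
            + ((m:ℝ) * Complex.I : ℂ) • (x*p-p*x))
          - (p*x*p + ((m:ℝ)^2 : ℂ) • x + ((m:ℝ) * Complex.I : ℂ) • (x*p-p*x))*(x*p-p*x))
        - ((m/2:ℝ) * Complex.I : ℂ) • (x*(p*x*p + ((m:ℝ)^2 : ℂ) • x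
            + ((m:ℝ) * Complex.I : ℂ) • (x*p-p*x))
          -(p*x*p + ((m:ℝ)^2 : ℂ) • x + ((m:ℝ) * Complex.I : ℂ) • (x*p-p*x))*x)
        = ((-s/2:ℝ):ℂ) • (p*x*p + ((m:ℝ)^2 : ℂ) • x + ((m:ℝ) * Complex.I : ℂ) • (x*p-p*x))
          + (((q+m^2*T)/2:ℝ):ℂ) • ((1/2:ℂ) • (x*p+p*x)) := by
        simp only [mul_add, add_mul, mul_sub, sub_mul, smul_add, smul_sub, mul_smul_comm,
          smul_mul_assoc, mul_assoc, hxx, hxx', hxpx, hxpx', hxppx, hxppx', smul_smul]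
        push_cast
        have hI : Complex.I ^ 2 = -1 := Complex.I_sq
        match_scalars <;> first | ring1 | (ring_nf; simp only [hI]; ring)
      rw [h2, hlin]
      field_simp
    · have hI : star (((n*μ/T:ℝ):ℂ) * Complex.I) = -(((n*μ/T:ℝ):ℂ) * Complex.I) := by
        rw [star_mul', Complex.star_def, Complex.conj_ofReal, Complex.conj_I]; ring
      have hI2 : star (((n*μ/T:ℝ):ℂ)^2) = ((n*μ/T:ℝ):ℂ)^2 := by
        rw [star_pow, Complex.star_def, Complex.conj_ofReal]
      rw [IsHermitian]
      simp only [conjTranspose_add, conjTranspose_sub, conjTranspose_smul, conjTranspose_mul,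
        hherm.eq, hph.eq, hI, hI2, mul_assoc]
      module
  · simp only [aux_LL hn0 μ T hT0 x p _ _ hT, Yfun]
    rw [aux_sum E hEspan _ _ hherm, hadj, hL1, hL]
    have h1 : jInner 1 x = T / n := by
      unfold jInner; rw [one_mul, hT]; simp; ring
    rw [h1]
    have h2 : (1/4:ℂ) • ((x*p-p*x)*x - x*(x*p-p*x))
        - ((n*μ/T/2:ℝ) * Complex.I : ℂ) • (x*x-x*x)
        = ((s/2:ℝ):ℂ) • x + ((-T/2:ℝ):ℂ) • ((1/2:ℂ) • (x*p+p*x)) := by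
      simp only [mul_sub, sub_mul, smul_add, smul_sub, mul_smul_comm,
        smul_mul_assoc, mul_assoc, hxx, hxx', hxpx, hxpx', smul_smul]
      push_cast
      module
    rw [h2, hlin]
    field_simp
    ring
end
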